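/- arXiv:1312.0471 — 2 statements merged into one kernel-verified Lean document; each statement's English description precedes it below -/
import Mathlib

section
/- Let $\varphi$ be an automorphism of $\mathbb{B}_N$ whose only fixed point in $\overline{\mathbb{B}_N}$ is $e_1 = (1,0,\dots,0) \in S_N$. Then for all $z \in \mathbb{B}_N$, $\frac{|1-\varphi_1(z)|^2}{1-\|\varphi(z)\|^2} = \frac{|1-z_1|^2}{1-\|z\|^2}$, where $\varphi_1(z)$ and $z_1$ denote first components. -/
open Metric

/-!
For a holomorphic self-map `f` of the ball and `0 < r < 1`, the map `r • f` sends the ball into a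
smaller ball, so it strictly contracts the pseudo-hyperbolic distance `‖φ_a z‖`, where `φ_a` is the
involutive automorphism exchanging `0` and `a`; a point displaced the least is then fixed.
At a fixed point `a`, the Schwarz–Pick inequality says that `r • f` does not increase
`|1 - ⟪a, z⟫|² / (1 - ‖z‖²)`. Letting `r → 1` along a convergent sequence of such fixed points gives
Wolff's lemma. If `f` is an automorphism `φ` continuous up to the boundary, or its inverse, the
limit point is fixed by `φ`, hence is the given point `e`; the inequalities for `φ` and `φ⁻¹` are
opposite.
-/

open Filter Topology Set

section Coradius

variable {E : Type*} [NormedAddCommGroup E]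

theorem one_sub_norm_sq_pos {z : E} (hz : ‖z‖ < 1) : 0 < 1 - ‖z‖ ^ 2 :=
  sub_pos.2 (pow_lt_one₀ (norm_nonneg z) hz two_ne_zero)

/-- The number `√(1 - ‖a‖²)`, denoted `s_a` in the usual formula for the involution `φ_a` of the
ball. -/
noncomputable def coradius (a : E) : ℝ :=
  √(1 - ‖a‖ ^ 2)

theorem coradius_pos {a : E} (ha : ‖a‖ < 1) : 0 < coradius a :=
  Real.sqrt_pos.2 (one_sub_norm_sq_pos ha)

theorem coradius_sq {a : E} (ha : ‖a‖ < 1) : coradius a ^ 2 = 1 - ‖a‖ ^ 2 :=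
  Real.sq_sqrt (one_sub_norm_sq_pos ha).le

theorem continuous_coradius : Continuous (coradius : E → ℝ) := by
  unfold coradius
  fun_prop

theorem one_add_coradius_ne_zero (a : E) : (1 + coradius a : ℂ) ≠ 0 := by
  have hpos : 0 < 1 + coradius a := add_pos_of_pos_of_nonneg one_pos (Real.sqrt_nonneg _)
  exact_mod_cast hpos.ne'

end Coradius

section BallInvolution

variable {E F : Type*} [NormedAddCommGroup E] [InnerProductSpace ℂ E]
  [NormedAddCommGroup F] [InnerProductSpace ℂ F]

theorem one_sub_inner_ne_zero {a z : E} (ha : ‖a‖ ≤ 1) (hz : ‖z‖ < 1) :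
    1 - inner ℂ a z ≠ 0 := by
  refine sub_ne_zero.2 fun h => ?_
  have hlt : ‖inner ℂ a z‖ < 1 :=
    calc ‖inner ℂ a z‖ ≤ ‖a‖ * ‖z‖ := norm_inner_le_norm a z
      _ ≤ 1 * ‖z‖ := by gcongr
      _ < 1 := by rwa [one_mul]
  rw [← h, norm_one] at hlt
  exact lt_irrefl _ hlt

/-- The Julia quotient of `z` at `e`. For a unit vector `e` its sublevel sets in the unit ball are
the horoballs at `e`; points `e` of the open ball are allowed as well, so that it can be studied as
`e` tends to the sphere. -/
noncomputable def juliaQuotient (e z : E) : ℝ :=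
  ‖1 - inner ℂ e z‖ ^ 2 / (1 - ‖z‖ ^ 2)

theorem juliaQuotient_pos {e z : E} (he : ‖e‖ ≤ 1) (hz : ‖z‖ < 1) : 0 < juliaQuotient e z :=
  div_pos (pow_pos (norm_pos_iff.2 (one_sub_inner_ne_zero he hz)) 2) (one_sub_norm_sq_pos hz)

theorem juliaQuotient_le {e z : E} {r : ℝ} (he : ‖e‖ ≤ 1) (hz : ‖z‖ ≤ r) (hr : r < 1) :
    juliaQuotient e z ≤ 4 / (1 - r ^ 2) := by
  have hr_pos : 0 < 1 - r ^ 2 := by nlinarith [norm_nonneg z]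
  have hnum : ‖1 - inner ℂ e z‖ ≤ 2 :=
    calc ‖1 - inner ℂ e z‖ ≤ ‖(1 : ℂ)‖ + ‖inner ℂ e z‖ := norm_sub_le _ _
      _ ≤ 1 + ‖e‖ * ‖z‖ := by rw [norm_one]; gcongr; exact norm_inner_le_norm e z
      _ ≤ 1 + 1 * 1 := by gcongr; exact hz.trans hr.le
      _ = 2 := by norm_num
  calc juliaQuotient e z ≤ 2 ^ 2 / (1 - r ^ 2) := by unfold juliaQuotient; gcongr
    _ = 4 / (1 - r ^ 2) := by norm_num

theorem tendsto_juliaQuotient {ι : Type*} {l : Filter ι} {a w : ι → E} {e z : E}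
    (ha : Tendsto a l (𝓝 e)) (hw : Tendsto w l (𝓝 z)) (hz : ‖z‖ < 1) :
    Tendsto (fun i => juliaQuotient (a i) (w i)) l (𝓝 (juliaQuotient e z)) :=
  ((tendsto_const_nhds.sub (ha.inner hw)).norm.pow 2).div
    (tendsto_const_nhds.sub (hw.norm.pow 2)) (one_sub_norm_sq_pos hz).ne'

theorem inner_self_eq_one_sub_coradius_sq {a : E} (ha : ‖a‖ < 1) :
    inner ℂ a a = 1 - (coradius a : ℂ) ^ 2 := by
  have hnorm : ‖a‖ ^ 2 = 1 - coradius a ^ 2 := by linarith [coradius_sq ha]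
  have hnorm_complex : (‖a‖ : ℂ) ^ 2 = 1 - (coradius a : ℂ) ^ 2 := by exact_mod_cast hnorm
  exact (inner_self_eq_norm_sq_to_K a).trans hnorm_complex

/-- The involution `φ_a` of the unit ball exchanging `0` and `a`. It is usually written
`(a - P z - s_a (z - P z)) / (1 - ⟪a, z⟫)` with `P` the orthogonal projection onto the line of `a`;
substituting `(1 - s_a) / ‖a‖² = 1 / (1 + s_a)` makes `a = 0` an ordinary case. -/
noncomputable def ballInvolution (a z : E) : E :=
  (1 - inner ℂ a z)⁻¹ • (a - (coradius a : ℂ) • z - (inner ℂ a z / (1 + coradius a)) • a)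

@[simp]
theorem ballInvolution_zero (a : E) : ballInvolution a 0 = a := by
  simp [ballInvolution]

theorem norm_sq_ballInvolution_numerator {a z : E} (ha : ‖a‖ < 1) :
    ‖a - (coradius a : ℂ) • z - (inner ℂ a z / (1 + coradius a)) • a‖ ^ 2 =
      ‖1 - inner ℂ a z‖ ^ 2 - (1 - ‖a‖ ^ 2) * (1 - ‖z‖ ^ 2) := by
  set s := coradius a
  set c : ℂ := 1 - inner ℂ a z / (1 + s) with hc
  have hvec : a - (s : ℂ) • z - (inner ℂ a z / (1 + s)) • a = c • a - (s : ℂ) • z := by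
    module
  have hinner : inner ℂ a z = (1 + s) * (1 - c) := by
    rw [hc, sub_sub_cancel, mul_div_cancel₀ _ (one_add_coradius_ne_zero a)]
  have hnorm : ‖a‖ ^ 2 = 1 - s ^ 2 := by linarith [coradius_sq ha]
  rw [hvec, @norm_sub_sq ℂ, norm_smul, norm_smul, inner_smul_left, inner_smul_right, hinner,
    mul_pow, mul_pow, hnorm]
  simp only [Complex.sq_norm, Complex.normSq_apply, RCLike.re_to_complex, Complex.mul_re,
    Complex.mul_im, Complex.add_re, Complex.add_im, Complex.sub_re, Complex.sub_im, Complex.one_re,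
    Complex.one_im, Complex.ofReal_re, Complex.ofReal_im, Complex.conj_re, Complex.conj_im]
  ring

theorem one_sub_norm_ballInvolution_sq {a z : E} (ha : ‖a‖ < 1) (hz : ‖z‖ < 1) :
    1 - ‖ballInvolution a z‖ ^ 2 = (1 - ‖a‖ ^ 2) / juliaQuotient a z := by
  have hne : ‖1 - inner ℂ a z‖ ≠ 0 := norm_ne_zero_iff.2 (one_sub_inner_ne_zero ha.le hz)
  rw [ballInvolution, norm_smul, norm_inv, mul_pow, norm_sq_ballInvolution_numerator ha,
    juliaQuotient]
  field_simp
  ring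

theorem norm_ballInvolution_lt_one {a z : E} (ha : ‖a‖ < 1) (hz : ‖z‖ < 1) :
    ‖ballInvolution a z‖ < 1 := by
  have hpos : 0 < 1 - ‖ballInvolution a z‖ ^ 2 := by
    rw [one_sub_norm_ballInvolution_sq ha hz]
    exact div_pos (one_sub_norm_sq_pos ha) (juliaQuotient_pos ha.le hz)
  exact (sq_lt_one_iff₀ (norm_nonneg _)).1 (sub_pos.1 hpos)

theorem mapsTo_ballInvolution {a : E} (ha : ‖a‖ < 1) :
    MapsTo (ballInvolution a) (ball 0 1) (ball 0 1) := fun _ hz =>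
  mem_ball_zero_iff.2 (norm_ballInvolution_lt_one ha (mem_ball_zero_iff.1 hz))

theorem exists_norm_ballInvolution_le {a : E} {r : ℝ} (ha : ‖a‖ < 1) (hr : r < 1) :
    ∃ R < 1, ∀ z : E, ‖z‖ ≤ r → ‖ballInvolution a z‖ ≤ R := by
  rcases lt_or_ge r 0 with hr_neg | hr_nonneg
  · exact ⟨0, one_pos, fun z hz => absurd (hz.trans_lt hr_neg) (norm_nonneg z).not_gt⟩
  set δ := (1 - ‖a‖ ^ 2) / (4 / (1 - r ^ 2))
  have hr_pos : 0 < 1 - r ^ 2 := by nlinarith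
  have hδ : 0 < δ := div_pos (one_sub_norm_sq_pos ha) (by positivity)
  refine ⟨√(1 - δ), (Real.sqrt_lt' one_pos).2 (by linarith), fun z hz => Real.le_sqrt_of_sq_le ?_⟩
  have hz_lt : ‖z‖ < 1 := hz.trans_lt hr
  have hδ_le : δ ≤ 1 - ‖ballInvolution a z‖ ^ 2 := by
    rw [one_sub_norm_ballInvolution_sq ha hz_lt]
    exact div_le_div_of_nonneg_left (one_sub_norm_sq_pos ha).le (juliaQuotient_pos ha.le hz_lt)
      (juliaQuotient_le ha.le hz hr)
  linarith

theorem one_sub_inner_ballInvolution {a z : E} (ha : ‖a‖ < 1) (hz : ‖z‖ < 1) :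
    1 - inner ℂ a (ballInvolution a z) = (coradius a : ℂ) ^ 2 / (1 - inner ℂ a z) := by
  have hden := one_sub_inner_ne_zero ha.le hz
  have hs := one_add_coradius_ne_zero a
  rw [ballInvolution, inner_smul_right, inner_sub_right, inner_sub_right, inner_smul_right,
    inner_smul_right, inner_self_eq_one_sub_coradius_sq ha]
  field_simp
  ring

theorem ballInvolution_ballInvolution {a z : E} (ha : ‖a‖ < 1) (hz : ‖z‖ < 1) :
    ballInvolution a (ballInvolution a z) = z := by
  have hden := one_sub_inner_ne_zero ha.le hz
  have hs := one_add_coradius_ne_zero a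
  have hs₀ : (coradius a : ℂ) ≠ 0 := by exact_mod_cast (coradius_pos ha).ne'
  have hinner : inner ℂ a (ballInvolution a z) = 1 - (coradius a : ℂ) ^ 2 / (1 - inner ℂ a z) := by
    rw [← one_sub_inner_ballInvolution ha hz, sub_sub_cancel]
  rw [ballInvolution, hinner, ballInvolution]
  match_scalars
  · field_simp
    ring
  · field_simp
    ring

theorem ballInvolution_eq_zero_iff {a z : E} (ha : ‖a‖ < 1) (hz : ‖z‖ < 1) :
    ballInvolution a z = 0 ↔ z = a := by
  constructor
  · intro h
    rw [← ballInvolution_ballInvolution ha hz, h, ballInvolution_zero]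
  · rintro rfl
    simpa using ballInvolution_ballInvolution ha (z := 0) (by simp)

theorem differentiableOn_ballInvolution {a : E} (ha : ‖a‖ < 1) :
    DifferentiableOn ℂ (ballInvolution a) (ball 0 1) := by
  have hinner : Differentiable ℂ fun z : E => inner ℂ a z := (innerSL ℂ a).differentiable
  have hdiv : Differentiable ℂ fun z : E => inner ℂ a z / (1 + coradius a : ℂ) := by
    simpa only [div_eq_mul_inv] using hinner.mul_const _
  have hden : ∀ z ∈ ball (0 : E) 1, 1 - inner ℂ a z ≠ 0 := fun z hz =>
    one_sub_inner_ne_zero ha.le (mem_ball_zero_iff.1 hz)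
  exact ((hinner.const_sub 1).differentiableOn.inv hden).smul
    (Differentiable.differentiableOn (by fun_prop))

theorem continuousOn_ballInvolution :
    ContinuousOn (fun p : E × E => ballInvolution p.1 p.2) (ball 0 1 ×ˢ ball 0 1) := by
  have hs : Continuous fun p : E × E => (coradius p.1 : ℂ) :=
    Complex.continuous_ofReal.comp (continuous_coradius.comp continuous_fst)
  have hinner : Continuous fun p : E × E => inner ℂ p.1 p.2 := continuous_fst.inner continuous_snd
  have hdiv : Continuous fun p : E × E => inner ℂ p.1 p.2 / (1 + coradius p.1 : ℂ) :=
    hinner.div (continuous_const.add hs) fun p => one_add_coradius_ne_zero p.1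
  have hden : ∀ p ∈ ball (0 : E) 1 ×ˢ ball (0 : E) 1, 1 - inner ℂ p.1 p.2 ≠ 0 := fun p hp =>
    one_sub_inner_ne_zero (mem_ball_zero_iff.1 hp.1).le (mem_ball_zero_iff.1 hp.2)
  exact ((continuous_const.sub hinner).continuousOn.inv₀ hden).smul
    (Continuous.continuousOn (by fun_prop))

theorem norm_ballInvolution_map_le_mul {f : E → F} {R : ℝ} {a z : E}
    (hf : DifferentiableOn ℂ f (ball 0 1)) (hm : MapsTo f (ball 0 1) (ball 0 1))
    (ha : ‖a‖ < 1) (hR : ∀ w ∈ ball (0 : E) 1, ‖ballInvolution (f a) (f w)‖ ≤ R) (hz : ‖z‖ < 1) :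
    ‖ballInvolution (f a) (f z)‖ ≤ R * ‖ballInvolution a z‖ := by
  have hfa : ‖f a‖ < 1 := mem_ball_zero_iff.1 (hm (mem_ball_zero_iff.2 ha))
  let g : E → F := fun w => ballInvolution (f a) (f (ballInvolution a w))
  have hg_zero : g 0 = 0 := by
    simp only [g, ballInvolution_zero, (ballInvolution_eq_zero_iff hfa hfa).2]
  have hg_diff : DifferentiableOn ℂ g (ball 0 1) :=
    (differentiableOn_ballInvolution hfa).comp
      (hf.comp (differentiableOn_ballInvolution ha) (mapsTo_ballInvolution ha))
      (hm.comp (mapsTo_ballInvolution ha))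
  have hg_maps : MapsTo g (ball 0 1) (closedBall (g 0) R) := fun w hw => by
    rw [hg_zero, mem_closedBall_zero_iff]
    exact hR _ (mapsTo_ballInvolution ha hw)
  have hschwarz := Complex.dist_le_div_mul_dist_of_mapsTo_ball hg_diff hg_maps
    (mem_ball_zero_iff.2 (norm_ballInvolution_lt_one ha hz))
  simpa only [hg_zero, dist_zero_right, div_one, g, ballInvolution_ballInvolution ha hz]
    using hschwarz

theorem norm_ballInvolution_map_le {f : E → F} {a z : E} (hf : DifferentiableOn ℂ f (ball 0 1))
    (hm : MapsTo f (ball 0 1) (ball 0 1)) (ha : ‖a‖ < 1) (hz : ‖z‖ < 1) :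
    ‖ballInvolution (f a) (f z)‖ ≤ ‖ballInvolution a z‖ := by
  have hmem : ∀ w ∈ ball (0 : E) 1, ‖f w‖ < 1 := fun w hw => mem_ball_zero_iff.1 (hm hw)
  have hle := norm_ballInvolution_map_le_mul hf hm ha (fun w hw =>
    (norm_ballInvolution_lt_one (hmem a (mem_ball_zero_iff.2 ha)) (hmem w hw)).le) hz
  rwa [one_mul] at hle

theorem juliaQuotient_map_le_of_fixed {f : E → E} {a z : E} (hf : DifferentiableOn ℂ f (ball 0 1))
    (hm : MapsTo f (ball 0 1) (ball 0 1)) (ha : ‖a‖ < 1) (hfa : f a = a) (hz : ‖z‖ < 1) :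
    juliaQuotient a (f z) ≤ juliaQuotient a z := by
  have hfz : ‖f z‖ < 1 := mem_ball_zero_iff.1 (hm (mem_ball_zero_iff.2 hz))
  have hpick : ‖ballInvolution a (f z)‖ ≤ ‖ballInvolution a z‖ := by
    simpa only [hfa] using norm_ballInvolution_map_le hf hm ha hz
  have hdiv : (1 - ‖a‖ ^ 2) / juliaQuotient a z ≤ (1 - ‖a‖ ^ 2) / juliaQuotient a (f z) := by
    rw [← one_sub_norm_ballInvolution_sq ha hz, ← one_sub_norm_ballInvolution_sq ha hfz]
    gcongr
  exact (div_le_div_iff_of_pos_left (one_sub_norm_sq_pos ha) (juliaQuotient_pos ha.le hz)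
    (juliaQuotient_pos ha.le hfz)).1 hdiv

theorem exists_fixed_of_mapsTo_closedBall [ProperSpace E] {f : E → E} {r : ℝ} (hr : r < 1)
    (hf : DifferentiableOn ℂ f (ball 0 1)) (hm : MapsTo f (ball 0 1) (closedBall 0 r)) :
    ∃ a ∈ ball (0 : E) 1, f a = a := by
  have hsub : closedBall (0 : E) r ⊆ ball 0 1 := closedBall_subset_ball hr
  have hm_ball : MapsTo f (ball 0 1) (ball 0 1) := hm.mono_right hsub
  have hcont : ContinuousOn (fun z => ‖ballInvolution z (f z)‖) (closedBall 0 r) :=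
    ((continuousOn_ballInvolution.comp (continuousOn_id.prodMk hf.continuousOn)
      fun z hz => ⟨hz, hm_ball hz⟩).mono hsub).norm
  obtain ⟨a, ha_mem, hmin⟩ := (isCompact_closedBall (0 : E) r).exists_isMinOn
    ⟨f 0, hm (mem_ball_self one_pos)⟩ hcont
  refine ⟨a, hsub ha_mem, ?_⟩
  have ha : ‖a‖ < 1 := mem_ball_zero_iff.1 (hsub ha_mem)
  have hfa : ‖f a‖ < 1 := mem_ball_zero_iff.1 (hm_ball (hsub ha_mem))
  obtain ⟨R, hR, hbound⟩ := exists_norm_ballInvolution_le hfa hr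
  have hle : ‖ballInvolution a (f a)‖ ≤ R * ‖ballInvolution a (f a)‖ :=
    calc ‖ballInvolution a (f a)‖
      _ ≤ ‖ballInvolution (f a) (f (f a))‖ := hmin (hm (hsub ha_mem))
      _ ≤ R * ‖ballInvolution a (f a)‖ := norm_ballInvolution_map_le_mul hf hm_ball ha
          (fun w hw => hbound _ (mem_closedBall_zero_iff.1 (hm hw))) hfa
  rw [← ballInvolution_eq_zero_iff ha hfa, ← norm_le_zero_iff]
  nlinarith

end BallInvolution

section WolffPoint

theorem mem_and_fixed_of_tendsto {X ι : Type*} [TopologicalSpace X] [T2Space X] {l : Filter ι}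
    [l.NeBot] {s : Set X} {f : X → X} {a : ι → X} {ξ : X} (hs : IsClosed s)
    (hf : ContinuousOn f s) (ha_mem : ∀ i, a i ∈ s) (ha : Tendsto a l (𝓝 ξ))
    (hfa : Tendsto (fun i => f (a i)) l (𝓝 ξ)) : ξ ∈ s ∧ f ξ = ξ := by
  have hmem : ∀ᶠ i in l, a i ∈ s := Eventually.of_forall ha_mem
  have hξ : ξ ∈ s := hs.mem_of_tendsto ha hmem
  exact ⟨hξ, tendsto_nhds_unique
    ((hf ξ hξ).tendsto.comp (tendsto_nhdsWithin_iff.2 ⟨ha, hmem⟩)) hfa⟩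

variable {E F : Type*} [NormedAddCommGroup E] [NormedAddCommGroup F]

theorem mapsTo_const_smul_closedBall [NormedSpace ℂ F] {f : E → F} {r : ℝ} (hr : 0 ≤ r)
    (hm : MapsTo f (ball 0 1) (ball 0 1)) :
    MapsTo (fun z => (r : ℂ) • f z) (ball 0 1) (closedBall 0 r) := fun z hz => by
  rw [mem_closedBall_zero_iff, norm_smul, Complex.norm_of_nonneg hr]
  exact mul_le_of_le_one_right hr (mem_ball_zero_iff.1 (hm hz)).le

variable [NormedSpace ℂ E]

/-- `ξ` is a limit, as `r < 1` tends to `1`, of fixed points of `r • f` in the unit ball. It plays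
the role of the Wolff point of `f`, but is not required to be on the sphere. -/
def IsWolffPoint (f : E → E) (ξ : E) : Prop :=
  ∃ (r : ℕ → ℝ) (a : ℕ → E), (∀ n, r n ∈ Ioo 0 1) ∧ Tendsto r atTop (𝓝 1) ∧
    (∀ n, a n ∈ ball 0 1) ∧ Tendsto a atTop (𝓝 ξ) ∧ ∀ n, (r n : ℂ) • f (a n) = a n

theorem IsWolffPoint.exists_tendsto {f : E → E} {ξ : E} (hξ : IsWolffPoint f ξ) :
    ∃ a : ℕ → E, (∀ n, a n ∈ ball 0 1) ∧ Tendsto a atTop (𝓝 ξ) ∧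
      Tendsto (fun n => f (a n)) atTop (𝓝 ξ) := by
  obtain ⟨r, a, hr_mem, hr, ha_mem, ha, hfix⟩ := hξ
  have hfa : ∀ n, f (a n) = (r n : ℂ)⁻¹ • a n := fun n =>
    (eq_inv_smul_iff₀ (by exact_mod_cast (hr_mem n).1.ne')).2 (hfix n)
  refine ⟨a, ha_mem, ha, ?_⟩
  simpa [hfa] using (hr.ofReal.inv₀ (by simp)).smul ha

theorem IsWolffPoint.mem_closedBall_and_fixed {f : E → E} {ξ : E} (hξ : IsWolffPoint f ξ)
    (hf : ContinuousOn f (closedBall 0 1)) : ξ ∈ closedBall 0 1 ∧ f ξ = ξ := by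
  obtain ⟨a, ha_mem, ha, hfa⟩ := hξ.exists_tendsto
  exact mem_and_fixed_of_tendsto isClosed_closedBall hf
    (fun n => ball_subset_closedBall (ha_mem n)) ha hfa

theorem IsWolffPoint.mem_closedBall_and_fixed_of_rightInvOn {f g : E → E} {ξ : E}
    (hξ : IsWolffPoint g ξ) (hf : ContinuousOn f (closedBall 0 1))
    (hgm : MapsTo g (ball 0 1) (ball 0 1)) (hfg : RightInvOn g f (ball 0 1)) :
    ξ ∈ closedBall 0 1 ∧ f ξ = ξ := by
  obtain ⟨a, ha_mem, ha, hga⟩ := hξ.exists_tendsto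
  exact mem_and_fixed_of_tendsto isClosed_closedBall hf
    (fun n => ball_subset_closedBall (hgm (ha_mem n))) hga (ha.congr fun n => (hfg (ha_mem n)).symm)

end WolffPoint

section WolffLemma

variable {E : Type*} [NormedAddCommGroup E] [InnerProductSpace ℂ E]

theorem exists_isWolffPoint [ProperSpace E] {f : E → E} (hf : DifferentiableOn ℂ f (ball 0 1))
    (hm : MapsTo f (ball 0 1) (ball 0 1)) : ∃ ξ, IsWolffPoint f ξ := by
  obtain ⟨r, -, hr_mem, hr⟩ := exists_seq_strictMono_tendsto' (zero_lt_one (α := ℝ))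
  choose a ha hfix using fun n => exists_fixed_of_mapsTo_closedBall (hr_mem n).2
    (hf.const_smul (r n : ℂ)) (mapsTo_const_smul_closedBall (hr_mem n).1.le hm)
  obtain ⟨ξ, -, k, hk, hlim⟩ := (isCompact_closedBall (0 : E) 1).tendsto_subseq
    fun n => ball_subset_closedBall (ha n)
  exact ⟨ξ, r ∘ k, a ∘ k, fun n => hr_mem _, hr.comp hk.tendsto_atTop, fun n => ha _, hlim,
    fun n => hfix _⟩

theorem IsWolffPoint.juliaQuotient_map_le {f : E → E} {ξ z : E} (hξ : IsWolffPoint f ξ)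
    (hf : DifferentiableOn ℂ f (ball 0 1)) (hm : MapsTo f (ball 0 1) (ball 0 1)) (hz : ‖z‖ < 1) :
    juliaQuotient ξ (f z) ≤ juliaQuotient ξ z := by
  obtain ⟨r, a, hr_mem, hr, ha_mem, ha, hfix⟩ := hξ
  have hfz : ‖f z‖ < 1 := mem_ball_zero_iff.1 (hm (mem_ball_zero_iff.2 hz))
  have hrf : Tendsto (fun n => (r n : ℂ) • f z) atTop (𝓝 (f z)) := by
    simpa using hr.ofReal.smul_const (f z)
  refine le_of_tendsto_of_tendsto' (tendsto_juliaQuotient ha hrf hfz)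
    (tendsto_juliaQuotient ha tendsto_const_nhds hz) fun n => ?_
  exact juliaQuotient_map_le_of_fixed (hf.const_smul (r n : ℂ))
    ((mapsTo_const_smul_closedBall (hr_mem n).1.le hm).mono_right
      (closedBall_subset_ball (hr_mem n).2))
    (mem_ball_zero_iff.1 (ha_mem n)) (hfix n) hz

theorem stmt11_general [ProperSpace E] {φ ψ : E → E} {e z : E}
    (hφc : ContinuousOn φ (closedBall 0 1)) (hφ : DifferentiableOn ℂ φ (ball 0 1))
    (hψ : DifferentiableOn ℂ ψ (ball 0 1)) (hφm : MapsTo φ (ball 0 1) (ball 0 1))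
    (hψm : MapsTo ψ (ball 0 1) (ball 0 1)) (hinv : InvOn ψ φ (ball 0 1) (ball 0 1))
    (honly : ∀ w ∈ closedBall (0 : E) 1, φ w = w → w = e) (hz : z ∈ ball (0 : E) 1) :
    juliaQuotient e (φ z) = juliaQuotient e z := by
  obtain ⟨ξ, hξ⟩ := exists_isWolffPoint hφ hφm
  obtain ⟨η, hη⟩ := exists_isWolffPoint hψ hψm
  obtain ⟨hξ_mem, hξ_fix⟩ := hξ.mem_closedBall_and_fixed hφc
  obtain ⟨hη_mem, hη_fix⟩ := hη.mem_closedBall_and_fixed_of_rightInvOn hφc hψm hinv.2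
  obtain rfl := honly ξ hξ_mem hξ_fix
  obtain rfl := honly η hη_mem hη_fix
  refine le_antisymm (hξ.juliaQuotient_map_le hφ hφm (mem_ball_zero_iff.1 hz)) ?_
  simpa only [hinv.1 hz] using hη.juliaQuotient_map_le hψ hψm (mem_ball_zero_iff.1 (hφm hz))

end WolffLemma

/-- If `φ` is an automorphism of `𝔹_N` whose only fixed point in the closed ball is
`e₁ = (1,0,…,0)`, then `|1-φ(z)₁|²/(1-‖φ(z)‖²) = |1-z₁|²/(1-‖z‖²)` for all `z ∈ 𝔹_N`. -/
theorem stmt11 {N : ℕ}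
    (φ φinv : EuclideanSpace ℂ (Fin (N + 1)) → EuclideanSpace ℂ (Fin (N + 1)))
    (e₁ : EuclideanSpace ℂ (Fin (N + 1))) (he₁ : e₁ = EuclideanSpace.single 0 1)
    (hφc : ContinuousOn φ (closedBall 0 1))
    (hφ : DifferentiableOn ℂ φ (ball 0 1))
    (hφinv : DifferentiableOn ℂ φinv (ball 0 1))
    (hφm : Set.MapsTo φ (ball 0 1) (ball 0 1))
    (hφinvm : Set.MapsTo φinv (ball 0 1) (ball 0 1))
    (hleft : ∀ z ∈ ball (0 : EuclideanSpace ℂ (Fin (N + 1))) 1, φinv (φ z) = z)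
    (hright : ∀ z ∈ ball (0 : EuclideanSpace ℂ (Fin (N + 1))) 1, φ (φinv z) = z)
    (hfix : φ e₁ = e₁)
    (honly : ∀ z ∈ closedBall (0 : EuclideanSpace ℂ (Fin (N + 1))) 1, φ z = z → z = e₁) :
    ∀ z ∈ ball (0 : EuclideanSpace ℂ (Fin (N + 1))) 1,
      ‖(1 : ℂ) - φ z 0‖ ^ 2 / (1 - ‖φ z‖ ^ 2) = ‖(1 : ℂ) - z 0‖ ^ 2 / (1 - ‖z‖ ^ 2) := by
  intro z hz
  simpa [juliaQuotient, he₁, EuclideanSpace.inner_single_left] using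
    stmt11_general hφc hφ hφinv hφm hφinvm ⟨hleft, hright⟩ honly hz
end

section
/- Let $\varphi$ be a parabolic automorphism of $\mathbb{D}$ with unique fixed point $a \in \partial\mathbb{D}$. For every $\delta \in (0,1)$ there exists $z_0 \in \mathbb{D}$ such that the orbit points $\varphi_j(z_0)$, $j \in \mathbb{Z}$, are pseudo-hyperbolically separated: $d(\varphi_{j_1}(z_0), \varphi_{j_2}(z_0)) > \delta$ whenever $j_1 \neq j_2$. -/
open Metric

/-- The `k`-th iterate of `φ` for `k ∈ ℤ`, where negative iterates use the inverse `φinv`. -/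
noncomputable def iterZ (φ φinv : ℂ → ℂ) (k : ℤ) : ℂ → ℂ :=
  if 0 ≤ k then φ^[k.toNat] else φinv^[(-k).toNat]

/-!
By the Schwarz lemma, `φ` is a rotation of a Blaschke factor. The Cayley transform at `a` carries
`𝔻` to the right half-plane and `a` to `∞`, so it conjugates `φ` to an affine map `w ↦ p w + i t`
with `p`, `t` real. Such a map has a fixed point on the imaginary axis, that is, `φ` has a second
fixed point on the circle, unless `p = 1` and `t ≠ 0`. Hence `φ` becomes a vertical translation by
some `t ≠ 0`, and the orbit of a point `x > 0` lies on the line `re w = x` with gaps at least `|t|`.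
Pseudo-hyperbolically these gaps tend to `1` as `x → 0`.
-/

open scoped ComplexConjugate

/-- The Blaschke factor with zero `b`, an automorphism of the unit disc when `‖b‖ < 1`. Its norm
`‖blaschkeFactor b z‖` is the pseudo-hyperbolic distance between `z` and `b`. -/
noncomputable def blaschkeFactor (b z : ℂ) : ℂ :=
  (z - b) / (1 - conj b * z)

/-- `φ` is a holomorphic automorphism of the unit disc, with inverse `ψ`. Nothing is required of
the two maps outside the open disc. -/
structure IsDiscAut (φ ψ : ℂ → ℂ) : Prop where
  differentiableOn : DifferentiableOn ℂ φ (ball 0 1)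
  differentiableOn_inv : DifferentiableOn ℂ ψ (ball 0 1)
  mapsTo : Set.MapsTo φ (ball 0 1) (ball 0 1)
  mapsTo_inv : Set.MapsTo ψ (ball 0 1) (ball 0 1)
  leftInvOn : Set.LeftInvOn ψ φ (ball 0 1)
  rightInvOn : Set.RightInvOn ψ φ (ball 0 1)

/-- The Cayley transform at a point `a` of the unit circle, carrying the unit disc to the right
half-plane and `a` to `∞`; division by zero gives the junk value `cayley a a = 0`. -/
noncomputable def cayley (a z : ℂ) : ℂ :=
  (a + z) / (a - z)

/-- The inverse of the Cayley transform `cayley a`, with junk value `0` at the pole `w = -1`. -/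
noncomputable def cayleyInv (a w : ℂ) : ℂ :=
  a * (w - 1) / (w + 1)

lemma ne_of_mem_ball_of_norm_eq_one {a z : ℂ} (ha : ‖a‖ = 1) (hz : z ∈ ball (0 : ℂ) 1) : z ≠ a :=
  ne_of_apply_ne norm (ha ▸ (mem_ball_zero_iff.mp hz).ne)

lemma conj_mul_self_eq_one {a : ℂ} (ha : ‖a‖ = 1) : conj a * a = 1 := by
  rw [Complex.conj_mul', ha, Complex.ofReal_one, one_pow]

section BlaschkeFactor

variable {b z : ℂ}

lemma one_sub_conj_mul_ne_zero (hb : ‖b‖ < 1) (hz : ‖z‖ ≤ 1) : 1 - conj b * z ≠ 0 := by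
  refine sub_ne_zero.mpr fun h => ?_
  have hnorm : ‖b‖ * ‖z‖ = 1 := by rw [← Complex.norm_conj b, ← norm_mul, ← h, norm_one]
  nlinarith [norm_nonneg b]

lemma one_sub_mul_conj_self_ne_zero (hb : ‖b‖ < 1) : 1 - b * conj b ≠ 0 :=
  mul_comm (conj b) b ▸ one_sub_conj_mul_ne_zero hb hb.le

lemma norm_one_sub_conj_mul_sq_sub_norm_sub_sq (b z : ℂ) :
    ‖1 - conj b * z‖ ^ 2 - ‖z - b‖ ^ 2 = (1 - ‖b‖ ^ 2) * (1 - ‖z‖ ^ 2) := by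
  simp only [Complex.sq_norm, Complex.normSq_apply, Complex.sub_re, Complex.sub_im, Complex.mul_re,
    Complex.mul_im, Complex.conj_re, Complex.conj_im, Complex.one_re, Complex.one_im]
  ring

lemma norm_blaschkeFactor_lt_one (hb : ‖b‖ < 1) (hz : ‖z‖ < 1) : ‖blaschkeFactor b z‖ < 1 := by
  rw [blaschkeFactor, norm_div,
    div_lt_one (norm_pos_iff.mpr (one_sub_conj_mul_ne_zero hb hz.le))]
  refine lt_of_pow_lt_pow_left₀ 2 (norm_nonneg _) (sub_pos.mp ?_)
  rw [norm_one_sub_conj_mul_sq_sub_norm_sub_sq]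
  have hb' : ‖b‖ ^ 2 < 1 := pow_lt_one₀ (norm_nonneg b) hb two_ne_zero
  have hz' : ‖z‖ ^ 2 < 1 := pow_lt_one₀ (norm_nonneg z) hz two_ne_zero
  exact mul_pos (sub_pos.mpr hb') (sub_pos.mpr hz')

lemma blaschkeFactor_mul_one_sub_conj_mul (hb : ‖b‖ < 1) (hz : ‖z‖ ≤ 1) :
    blaschkeFactor b z * (1 - conj b * z) = z - b :=
  div_mul_cancel₀ _ (one_sub_conj_mul_ne_zero hb hz)

lemma blaschkeFactor_neg_blaschkeFactor (hb : ‖b‖ < 1) (hz : ‖z‖ < 1) :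
    blaschkeFactor (-b) (blaschkeFactor b z) = z := by
  have hden : 1 - conj (-b) * blaschkeFactor b z ≠ 0 :=
    one_sub_conj_mul_ne_zero (by rwa [norm_neg]) (norm_blaschkeFactor_lt_one hb hz).le
  rw [blaschkeFactor, div_eq_iff hden, map_neg]
  linear_combination blaschkeFactor_mul_one_sub_conj_mul hb hz.le

lemma differentiableOn_blaschkeFactor (hb : ‖b‖ < 1) :
    DifferentiableOn ℂ (blaschkeFactor b) (ball 0 1) :=
  .div (by fun_prop) (by fun_prop) fun _ hz =>
    one_sub_conj_mul_ne_zero hb (mem_ball_zero_iff.mp hz).le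

lemma mapsTo_blaschkeFactor (hb : ‖b‖ < 1) :
    Set.MapsTo (blaschkeFactor b) (ball 0 1) (ball 0 1) := fun _ hz =>
  mem_ball_zero_iff.mpr (norm_blaschkeFactor_lt_one hb (mem_ball_zero_iff.mp hz))

lemma leftInvOn_blaschkeFactor_neg (hb : ‖b‖ < 1) :
    Set.LeftInvOn (blaschkeFactor (-b)) (blaschkeFactor b) (ball 0 1) := fun _ hz =>
  blaschkeFactor_neg_blaschkeFactor hb (mem_ball_zero_iff.mp hz)

lemma isDiscAut_blaschkeFactor (hb : ‖b‖ < 1) :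
    IsDiscAut (blaschkeFactor b) (blaschkeFactor (-b)) where
  differentiableOn := differentiableOn_blaschkeFactor hb
  differentiableOn_inv := differentiableOn_blaschkeFactor (by rwa [norm_neg])
  mapsTo := mapsTo_blaschkeFactor hb
  mapsTo_inv := mapsTo_blaschkeFactor (by rwa [norm_neg])
  leftInvOn := leftInvOn_blaschkeFactor_neg hb
  rightInvOn := by
    simpa only [neg_neg] using leftInvOn_blaschkeFactor_neg (b := -b) (by rwa [norm_neg])

end BlaschkeFactor

namespace IsDiscAut

variable {φ ψ φ' ψ' : ℂ → ℂ}

lemma symm (h : IsDiscAut φ ψ) : IsDiscAut ψ φ where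
  differentiableOn := h.differentiableOn_inv
  differentiableOn_inv := h.differentiableOn
  mapsTo := h.mapsTo_inv
  mapsTo_inv := h.mapsTo
  leftInvOn := h.rightInvOn
  rightInvOn := h.leftInvOn

lemma comp (h : IsDiscAut φ ψ) (h' : IsDiscAut φ' ψ') : IsDiscAut (φ ∘ φ') (ψ' ∘ ψ) where
  differentiableOn := h.differentiableOn.comp h'.differentiableOn h'.mapsTo
  differentiableOn_inv := h'.differentiableOn_inv.comp h.differentiableOn_inv h.mapsTo_inv
  mapsTo := h.mapsTo.comp h'.mapsTo
  mapsTo_inv := h'.mapsTo_inv.comp h.mapsTo_inv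
  leftInvOn := h'.leftInvOn.comp h.leftInvOn h'.mapsTo
  rightInvOn := h'.rightInvOn.comp h.rightInvOn h.mapsTo_inv

lemma norm_apply_le (h : IsDiscAut φ ψ) (h0 : φ 0 = 0) {z : ℂ} (hz : ‖z‖ < 1) : ‖φ z‖ ≤ ‖z‖ :=
  Complex.norm_le_norm_of_mapsTo_ball h.differentiableOn
    (h.mapsTo.mono_right ball_subset_closedBall) h0 hz

lemma norm_apply (h : IsDiscAut φ ψ) (h0 : φ 0 = 0) {z : ℂ} (hz : ‖z‖ < 1) : ‖φ z‖ = ‖z‖ := by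
  have hz' : z ∈ ball (0 : ℂ) 1 := mem_ball_zero_iff.mpr hz
  have hψ0 : ψ 0 = 0 := by
    rw [← h0, h.leftInvOn (mem_ball_self one_pos), h0]
  refine le_antisymm (h.norm_apply_le h0 hz) ?_
  calc ‖z‖ = ‖ψ (φ z)‖ := by rw [h.leftInvOn hz']
    _ ≤ ‖φ z‖ := h.symm.norm_apply_le hψ0 (mem_ball_zero_iff.mp (h.mapsTo hz'))

lemma exists_eqOn_mul_of_map_zero (h : IsDiscAut φ ψ) (h0 : φ 0 = 0) :
    ∃ l : ℂ, Set.EqOn φ (fun z => l * z) (ball 0 1) := by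
  have hhalf : ‖(1 / 2 : ℂ)‖ < 1 := by norm_num
  have hslope : ‖dslope φ 0 (1 / 2)‖ = 1 / 1 := by
    rw [dslope_of_ne _ (by norm_num), slope_def_module, h0, sub_zero, sub_zero, norm_smul,
      h.norm_apply h0 hhalf]
    norm_num
  have haffine := Complex.affine_of_mapsTo_ball_of_norm_dslope_eq_div h.differentiableOn
    (by simpa only [h0] using h.mapsTo.mono_right ball_subset_closedBall)
    (mem_ball_zero_iff.mpr hhalf) hslope
  refine ⟨dslope φ 0 (1 / 2), fun z hz => ?_⟩
  simpa only [h0, zero_add, sub_zero, smul_eq_mul, mul_comm] using haffine hz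

lemma exists_eqOn_mul_blaschkeFactor (h : IsDiscAut φ ψ) :
    ∃ b l : ℂ, ‖b‖ < 1 ∧ Set.EqOn φ (fun z => l * blaschkeFactor b z) (ball 0 1) := by
  have hzero : (0 : ℂ) ∈ ball (0 : ℂ) 1 := mem_ball_self one_pos
  have hb : ‖ψ 0‖ < 1 := mem_ball_zero_iff.mp (h.mapsTo_inv hzero)
  have hB := isDiscAut_blaschkeFactor hb
  have hcomp0 : (φ ∘ blaschkeFactor (-ψ 0)) 0 = 0 := by
    simpa [blaschkeFactor] using h.rightInvOn hzero
  obtain ⟨l, hrot⟩ := (h.comp hB.symm).exists_eqOn_mul_of_map_zero hcomp0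
  refine ⟨ψ 0, l, hb, fun z hz => ?_⟩
  simpa only [Function.comp_apply, hB.leftInvOn hz] using hrot (hB.mapsTo hz)

lemma exists_eqOn_closedBall_mul_blaschkeFactor (h : IsDiscAut φ ψ)
    (hcont : ContinuousOn φ (closedBall 0 1)) :
    ∃ b l : ℂ, ‖b‖ < 1 ∧ Set.EqOn φ (fun z => l * blaschkeFactor b z) (closedBall 0 1) := by
  obtain ⟨b, l, hb, heq⟩ := h.exists_eqOn_mul_blaschkeFactor
  have hB : ContinuousOn (blaschkeFactor b) (closedBall 0 1) :=
    .div (by fun_prop) (by fun_prop) fun z hz =>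
      one_sub_conj_mul_ne_zero hb (mem_closedBall_zero_iff.mp hz)
  exact ⟨b, l, hb, heq.of_subset_closure hcont (continuousOn_const.mul hB) ball_subset_closedBall
    (closure_ball 0 one_ne_zero).ge⟩

end IsDiscAut

section Cayley

variable {a z w : ℂ}

lemma cayley_eq_two_mul_div_sub_one (hz : z ≠ a) : cayley a z = 2 * a / (a - z) - 1 := by
  have hden : a - z ≠ 0 := sub_ne_zero.mpr hz.symm
  rw [cayley]
  field_simp
  ring

lemma sub_cayleyInv (hw : w + 1 ≠ 0) : a - cayleyInv a w = 2 * a / (w + 1) := by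
  rw [cayleyInv]
  field_simp
  ring

lemma cayleyInv_ne (ha : a ≠ 0) (hw : w + 1 ≠ 0) : cayleyInv a w ≠ a := by
  refine (sub_ne_zero.mp ?_).symm
  rw [sub_cayleyInv hw]
  exact div_ne_zero (mul_ne_zero two_ne_zero ha) hw

lemma cayley_cayleyInv (ha : a ≠ 0) (hw : w + 1 ≠ 0) : cayley a (cayleyInv a w) = w := by
  rw [cayley_eq_two_mul_div_sub_one (cayleyInv_ne ha hw), sub_cayleyInv hw]
  field_simp
  ring

lemma cayley_injOn (ha : a ≠ 0) : Set.InjOn (cayley a) {a}ᶜ := by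
  intro z hz w hw h
  rw [cayley_eq_two_mul_div_sub_one hz, cayley_eq_two_mul_div_sub_one hw, sub_left_inj,
    div_eq_mul_inv, div_eq_mul_inv, mul_right_inj' (mul_ne_zero two_ne_zero ha), inv_inj] at h
  exact sub_right_injective h

lemma norm_add_one_sq_sub_norm_sub_one_sq (w : ℂ) : ‖w + 1‖ ^ 2 - ‖w - 1‖ ^ 2 = 4 * w.re := by
  simp only [Complex.sq_norm, Complex.normSq_apply, Complex.add_re, Complex.add_im,
    Complex.sub_re, Complex.sub_im, Complex.one_re, Complex.one_im]
  ring

lemma add_one_ne_zero_of_re_nonneg (hw : 0 ≤ w.re) : w + 1 ≠ 0 := fun h => by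
  have hre : w.re + 1 = 0 := congrArg Complex.re h
  linarith

lemma norm_cayleyInv (ha : ‖a‖ = 1) (w : ℂ) : ‖cayleyInv a w‖ = ‖w - 1‖ / ‖w + 1‖ := by
  rw [cayleyInv, norm_div, norm_mul, ha, one_mul]

lemma norm_cayleyInv_le_one (ha : ‖a‖ = 1) (hw : 0 ≤ w.re) : ‖cayleyInv a w‖ ≤ 1 := by
  rw [norm_cayleyInv ha]
  refine div_le_one_of_le₀ (le_of_sq_le_sq ?_ (norm_nonneg _)) (norm_nonneg _)
  linarith [norm_add_one_sq_sub_norm_sub_one_sq w]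

lemma norm_cayleyInv_lt_one (ha : ‖a‖ = 1) (hw : 0 < w.re) : ‖cayleyInv a w‖ < 1 := by
  rw [norm_cayleyInv ha, div_lt_one (norm_pos_iff.mpr (add_one_ne_zero_of_re_nonneg hw.le))]
  refine lt_of_pow_lt_pow_left₀ 2 (norm_nonneg _) ?_
  linarith [norm_add_one_sq_sub_norm_sub_one_sq w]

lemma cayley_sub_cayley (hz : z ≠ a) (hw : w ≠ a) :
    cayley a z - cayley a w = 2 * a * (z - w) / ((a - z) * (a - w)) := by
  have hz' : a - z ≠ 0 := sub_ne_zero.mpr hz.symm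
  have hw' : a - w ≠ 0 := sub_ne_zero.mpr hw.symm
  rw [cayley, cayley]
  field_simp
  ring

lemma cayley_add_conj_cayley (ha : ‖a‖ = 1) (hz : z ≠ a) (hw : w ≠ a) :
    cayley a z + conj (cayley a w) = 2 * (1 - conj w * z) / ((a - z) * conj (a - w)) := by
  have hz' : a - z ≠ 0 := sub_ne_zero.mpr hz.symm
  have hw' : conj a - conj w ≠ 0 := by
    rw [← map_sub]
    exact (map_ne_zero _).mpr (sub_ne_zero.mpr hw.symm)
  simp only [cayley, map_div₀, map_add, map_sub]
  field_simp
  linear_combination 2 * conj_mul_self_eq_one ha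

lemma norm_blaschkeFactor_eq_norm_cayley (ha : ‖a‖ = 1) (hz : z ≠ a) (hw : w ≠ a) :
    ‖blaschkeFactor w z‖ =
      ‖cayley a z - cayley a w‖ / ‖cayley a z + conj (cayley a w)‖ := by
  have hz' : ‖a - z‖ ≠ 0 := norm_ne_zero_iff.mpr (sub_ne_zero.mpr hz.symm)
  have hw' : ‖a - w‖ ≠ 0 := norm_ne_zero_iff.mpr (sub_ne_zero.mpr hw.symm)
  rw [cayley_sub_cayley hz hw, cayley_add_conj_cayley ha hz hw, blaschkeFactor]
  simp only [norm_div, norm_mul, Complex.norm_conj, ha, mul_one]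
  field_simp

end Cayley

section FixedPoint

variable {a b l z : ℂ}

lemma mul_one_sub_mul_conj_of_fixed (ha : ‖a‖ = 1) (hb : ‖b‖ < 1)
    (hfix : l * blaschkeFactor b a = a) : l * (1 - b * conj a) = 1 - conj b * a := by
  have hB := blaschkeFactor_mul_one_sub_conj_mul hb ha.le
  linear_combination (-(conj a * l)) * hB + (conj a * (1 - conj b * a)) * hfix +
    (1 - conj b * a - l) * conj_mul_self_eq_one ha

lemma sub_mul_blaschkeFactor_mul (ha : ‖a‖ = 1) (hb : ‖b‖ < 1)
    (hfix : l * blaschkeFactor b a = a) (hz : ‖z‖ ≤ 1) :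
    (a - l * blaschkeFactor b z) * ((1 - b * conj a) * (1 - conj b * z)) =
      (1 - b * conj b) * (a - z) := by
  have hl := mul_one_sub_mul_conj_of_fixed ha hb hfix
  have hB := blaschkeFactor_mul_one_sub_conj_mul hb hz
  linear_combination (-(l * (1 - b * conj a))) * hB - (z - b) * hl -
    (b * (1 - conj b * z)) * conj_mul_self_eq_one ha

lemma mul_blaschkeFactor_ne_of_ne (ha : ‖a‖ = 1) (hb : ‖b‖ < 1)
    (hfix : l * blaschkeFactor b a = a) (hz : ‖z‖ ≤ 1) (hza : z ≠ a) :
    l * blaschkeFactor b z ≠ a := fun h => by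
  have hne := mul_ne_zero (one_sub_mul_conj_self_ne_zero hb) (sub_ne_zero.mpr hza.symm)
  rw [← sub_mul_blaschkeFactor_mul ha hb hfix hz, h, sub_self, zero_mul] at hne
  exact hne rfl

lemma cayley_mul_blaschkeFactor (ha : ‖a‖ = 1) (hb : ‖b‖ < 1)
    (hfix : l * blaschkeFactor b a = a) (hz : ‖z‖ ≤ 1) (hza : z ≠ a) :
    cayley a (l * blaschkeFactor b z) =
      (1 - conj b * a) * (1 - b * conj a) / (1 - b * conj b) * cayley a z +
        (conj b * a - b * conj a) / (1 - b * conj b) := by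
  have hφza := mul_blaschkeFactor_ne_of_ne ha hb hfix hz hza
  have hz' : a - z ≠ 0 := sub_ne_zero.mpr hza.symm
  have hb' : 1 - b * conj b ≠ 0 := one_sub_mul_conj_self_ne_zero hb
  have hdiv : 2 * a / (a - l * blaschkeFactor b z) =
      2 * a * ((1 - b * conj a) * (1 - conj b * z)) / ((1 - b * conj b) * (a - z)) := by
    rw [div_eq_div_iff (sub_ne_zero.mpr hφza.symm) (mul_ne_zero hb' hz')]
    linear_combination (-(2 * a)) * sub_mul_blaschkeFactor_mul ha hb hfix hz
  rw [cayley_eq_two_mul_div_sub_one hφza, cayley_eq_two_mul_div_sub_one hza, hdiv]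
  field_simp
  linear_combination (b * conj b * (z - a)) * conj_mul_self_eq_one ha

lemma cayley_mul_blaschkeFactor_eq_ofReal_mul_add (ha : ‖a‖ = 1) (hb : ‖b‖ < 1)
    (hfix : l * blaschkeFactor b a = a) (hz : ‖z‖ ≤ 1) (hza : z ≠ a) :
    cayley a (l * blaschkeFactor b z) =
      (‖1 - conj b * a‖ ^ 2 / (1 - ‖b‖ ^ 2) : ℝ) * cayley a z +
        (2 * (conj b * a).im / (1 - ‖b‖ ^ 2) : ℝ) * Complex.I := by
  have hnorm : ((‖1 - conj b * a‖ ^ 2 : ℝ) : ℂ) = (1 - conj b * a) * (1 - b * conj a) := by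
    rw [Complex.ofReal_pow, ← Complex.mul_conj']
    simp only [map_sub, map_one, map_mul, Complex.conj_conj]
  have him : ((2 * (conj b * a).im : ℝ) : ℂ) * Complex.I = conj b * a - b * conj a := by
    rw [← Complex.sub_conj]
    simp only [map_mul, Complex.conj_conj]
  have hden : ((1 - ‖b‖ ^ 2 : ℝ) : ℂ) = 1 - b * conj b := by
    rw [Complex.mul_conj', Complex.ofReal_sub, Complex.ofReal_one, Complex.ofReal_pow]
  rw [cayley_mul_blaschkeFactor ha hb hfix hz hza, Complex.ofReal_div, Complex.ofReal_div, hnorm,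
    hden, div_mul_eq_mul_div _ _ Complex.I, him]

end FixedPoint

lemma exists_mul_add_eq_self {K : Type*} [Field K] {p t : K} (h : p = 1 → t = 0) :
    ∃ s, p * s + t = s := by
  rcases eq_or_ne p 1 with rfl | hp
  · exact ⟨0, by rw [h rfl, mul_zero, add_zero]⟩
  · have hp' : 1 - p ≠ 0 := sub_ne_zero.mpr hp.symm
    refine ⟨t / (1 - p), ?_⟩
    field_simp
    ring

namespace IsDiscAut

variable {φ ψ : ℂ → ℂ} {a : ℂ}

lemma exists_cayley_apply_eq_mul_add (h : IsDiscAut φ ψ)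
    (hcont : ContinuousOn φ (closedBall 0 1)) (ha : ‖a‖ = 1) (hfix : φ a = a) :
    ∃ p t : ℝ, ∀ z ∈ closedBall (0 : ℂ) 1, z ≠ a →
      φ z ≠ a ∧ cayley a (φ z) = p * cayley a z + t * Complex.I := by
  obtain ⟨b, l, hb, hφ⟩ := h.exists_eqOn_closedBall_mul_blaschkeFactor hcont
  have hfix' : l * blaschkeFactor b a = a :=
    (hφ (mem_closedBall_zero_iff.mpr ha.le)).symm.trans hfix
  refine ⟨‖1 - conj b * a‖ ^ 2 / (1 - ‖b‖ ^ 2), 2 * (conj b * a).im / (1 - ‖b‖ ^ 2),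
    fun z hz hza => ?_⟩
  have hz' : ‖z‖ ≤ 1 := mem_closedBall_zero_iff.mp hz
  rw [hφ hz]
  exact ⟨mul_blaschkeFactor_ne_of_ne ha hb hfix' hz' hza,
    cayley_mul_blaschkeFactor_eq_ofReal_mul_add ha hb hfix' hz' hza⟩

lemma exists_cayley_apply_eq_add (h : IsDiscAut φ ψ) (hcont : ContinuousOn φ (closedBall 0 1))
    (ha : ‖a‖ = 1) (hfix : φ a = a) (honly : ∀ z ∈ closedBall (0 : ℂ) 1, φ z = z → z = a) :
    ∃ t : ℝ, t ≠ 0 ∧ ∀ z ∈ ball (0 : ℂ) 1, cayley a (φ z) = cayley a z + t * Complex.I := by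
  have ha0 : a ≠ 0 := norm_ne_zero_iff.mp (ha ▸ one_ne_zero)
  obtain ⟨p, t, haffine⟩ := h.exists_cayley_apply_eq_mul_add hcont ha hfix
  have htranslation : p = 1 ∧ t ≠ 0 := by
    by_contra! hpt
    obtain ⟨s, hs⟩ := exists_mul_add_eq_self hpt
    have hsre : 0 ≤ (s * Complex.I : ℂ).re := by simp
    have hs1 := add_one_ne_zero_of_re_nonneg hsre
    have hmem : cayleyInv a (s * Complex.I) ∈ closedBall 0 1 :=
      mem_closedBall_zero_iff.mpr (norm_cayleyInv_le_one ha hsre)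
    have hne := cayleyInv_ne ha0 hs1
    obtain ⟨hφne, hφ⟩ := haffine _ hmem hne
    refine hne (honly _ hmem (cayley_injOn ha0 hφne hne ?_))
    rw [hφ, cayley_cayleyInv ha0 hs1, ← mul_assoc, ← add_mul]
    exact_mod_cast congrArg (fun r : ℝ => (r : ℂ) * Complex.I) hs
  obtain ⟨rfl, ht⟩ := htranslation
  refine ⟨t, ht, fun z hz => ?_⟩
  rw [(haffine z (ball_subset_closedBall hz) (ne_of_mem_ball_of_norm_eq_one ha hz)).2,
    Complex.ofReal_one, one_mul]

end IsDiscAut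

section Iterates

lemma apply_iterate_eq_add_nsmul {α G : Type*} [AddMonoid G] {f : α → α} {s : Set α}
    {F : α → G} {t : G} (hf : Set.MapsTo f s s) (hF : ∀ z ∈ s, F (f z) = F z + t) {z : α}
    (hz : z ∈ s) (n : ℕ) : F (f^[n] z) = F z + n • t := by
  induction n with
  | zero => rw [Function.iterate_zero_apply, zero_nsmul, add_zero]
  | succ n ih =>
    rw [Function.iterate_succ_apply', hF _ (hf.iterate n hz), ih, succ_nsmul, add_assoc]

variable {φ ψ : ℂ → ℂ} {s : Set ℂ}

lemma mapsTo_iterZ (hφ : Set.MapsTo φ s s) (hψ : Set.MapsTo ψ s s) (k : ℤ) :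
    Set.MapsTo (iterZ φ ψ k) s s := by
  rw [iterZ]
  split_ifs
  exacts [hφ.iterate _, hψ.iterate _]

lemma apply_iterZ_eq_add_zsmul {G : Type*} [AddGroup G] {F : ℂ → G} {t : G}
    (hφ : Set.MapsTo φ s s) (hψ : Set.MapsTo ψ s s) (hright : Set.RightInvOn ψ φ s)
    (hF : ∀ z ∈ s, F (φ z) = F z + t) {z : ℂ} (hz : z ∈ s) (k : ℤ) :
    F (iterZ φ ψ k z) = F z + k • t := by
  have hFψ : ∀ z ∈ s, F (ψ z) = F z + -t := fun z hz => by
    rw [eq_add_neg_iff_add_eq, ← hF _ (hψ hz), hright hz]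
  rw [iterZ]
  split_ifs with hk
  · rw [apply_iterate_eq_add_nsmul hφ hF hz, ← natCast_zsmul, Int.toNat_of_nonneg hk]
  · rw [apply_iterate_eq_add_nsmul hψ hFψ hz, ← natCast_zsmul,
      Int.toNat_of_nonneg (by omega), neg_zsmul, zsmul_neg, neg_neg]

end Iterates

lemma lt_norm_mul_I_div_norm_add_mul_I {δ x τ : ℝ} (hδ : 0 ≤ δ) (hx : 0 < x)
    (h : δ * (2 * x) < (1 - δ) * |τ|) :
    δ < ‖(τ * Complex.I : ℂ)‖ / ‖(2 * x + τ * Complex.I : ℂ)‖ := by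
  have hpos : 0 < ‖(2 * x + τ * Complex.I : ℂ)‖ := by
    refine norm_pos_iff.mpr fun h0 => ?_
    have hre : x = 0 := by simpa using congrArg Complex.re h0
    exact hx.ne' hre
  have hnorm : ‖(τ * Complex.I : ℂ)‖ = |τ| := by
    rw [norm_mul, Complex.norm_I, mul_one, Complex.norm_real, Real.norm_eq_abs]
  have htri : ‖(2 * x + τ * Complex.I : ℂ)‖ ≤ 2 * x + |τ| := by
    refine (norm_add_le _ _).trans_eq ?_
    rw [hnorm, norm_mul, Complex.norm_ofNat, Complex.norm_of_nonneg hx.le]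
  rw [hnorm, lt_div_iff₀ hpos]
  calc δ * ‖(2 * x + τ * Complex.I : ℂ)‖ ≤ δ * (2 * x + |τ|) := by gcongr
    _ < |τ| := by linarith

lemma lt_norm_blaschkeFactor_of_cayley_eq {δ x s₁ s₂ : ℝ} {a z w : ℂ} (hδ : 0 ≤ δ) (hx : 0 < x)
    (ha : ‖a‖ = 1) (hza : z ≠ a) (hwa : w ≠ a) (hz : cayley a z = x + s₁ * Complex.I)
    (hw : cayley a w = x + s₂ * Complex.I) (h : δ * (2 * x) < (1 - δ) * |s₁ - s₂|) :
    δ < ‖blaschkeFactor w z‖ := by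
  have hsub : cayley a z - cayley a w = (s₁ - s₂ : ℝ) * Complex.I := by
    rw [hz, hw]
    push_cast
    ring
  have hadd : cayley a z + conj (cayley a w) = 2 * x + (s₁ - s₂ : ℝ) * Complex.I := by
    rw [hz, hw, map_add, map_mul, Complex.conj_ofReal, Complex.conj_ofReal, Complex.conj_I]
    push_cast
    ring
  rw [norm_blaschkeFactor_eq_norm_cayley ha hza hwa, hsub, hadd]
  exact lt_norm_mul_I_div_norm_add_mul_I hδ hx h

lemma abs_le_abs_intCast_mul_sub {t : ℝ} {j₁ j₂ : ℤ} (hj : j₁ ≠ j₂) :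
    |t| ≤ |j₁ * t - j₂ * t| := by
  rw [← sub_mul, abs_mul]
  refine le_mul_of_one_le_left (abs_nonneg t) ?_
  exact_mod_cast Int.one_le_abs (sub_ne_zero.mpr hj)

lemma exists_pos_forall_mul_lt_mul_abs_sub {δ t : ℝ} (hδ : δ < 1) (ht : t ≠ 0) :
    ∃ x : ℝ, 0 < x ∧ ∀ j₁ j₂ : ℤ, j₁ ≠ j₂ → δ * (2 * x) < (1 - δ) * |j₁ * t - j₂ * t| := by
  have hgap : 0 < (1 - δ) * |t| := mul_pos (sub_pos.mpr hδ) (abs_pos.mpr ht)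
  refine ⟨(1 - δ) * |t| / 2, half_pos hgap, fun j₁ j₂ hj => ?_⟩
  calc δ * (2 * ((1 - δ) * |t| / 2)) = δ * ((1 - δ) * |t|) := by ring
    _ < (1 - δ) * |t| := mul_lt_of_lt_one_left hgap hδ
    _ ≤ (1 - δ) * |j₁ * t - j₂ * t| :=
      mul_le_mul_of_nonneg_left (abs_le_abs_intCast_mul_sub hj) (sub_nonneg.mpr hδ.le)

/-- If `φ` is a parabolic automorphism of the unit disc with unique fixed point `a` on the
boundary, then for every `δ ∈ (0,1)` there is `z₀ ∈ 𝔻` whose orbit `(φ_j(z₀))_{j ∈ ℤ}` is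
pseudo-hyperbolically separated: `d(φ_{j₁}(z₀), φ_{j₂}(z₀)) > δ` whenever `j₁ ≠ j₂`. -/
theorem stmt13 (φ φinv : ℂ → ℂ)
    (hφc : ContinuousOn φ (closedBall 0 1))
    (hφ : DifferentiableOn ℂ φ (ball 0 1))
    (hφinv : DifferentiableOn ℂ φinv (ball 0 1))
    (hφm : Set.MapsTo φ (ball 0 1) (ball 0 1))
    (hφinvm : Set.MapsTo φinv (ball 0 1) (ball 0 1))
    (hleft : ∀ z ∈ ball (0 : ℂ) 1, φinv (φ z) = z)
    (hright : ∀ z ∈ ball (0 : ℂ) 1, φ (φinv z) = z)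
    (a : ℂ) (ha : ‖a‖ = 1) (hfix : φ a = a)
    (honly : ∀ z ∈ closedBall (0 : ℂ) 1, φ z = z → z = a)
    (δ : ℝ) (hδ : δ ∈ Set.Ioo (0 : ℝ) 1) :
    ∃ z₀ ∈ ball (0 : ℂ) 1, ∀ j₁ j₂ : ℤ, j₁ ≠ j₂ →
      δ < ‖(iterZ φ φinv j₁ z₀ - iterZ φ φinv j₂ z₀) /
            (1 - (starRingEnd ℂ) (iterZ φ φinv j₂ z₀) * iterZ φ φinv j₁ z₀)‖ := by
  have hφaut : IsDiscAut φ φinv := ⟨hφ, hφinv, hφm, hφinvm, hleft, hright⟩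
  have ha0 : a ≠ 0 := norm_ne_zero_iff.mp (ha ▸ one_ne_zero)
  obtain ⟨t, ht, htranslation⟩ := hφaut.exists_cayley_apply_eq_add hφc ha hfix honly
  obtain ⟨x, hx0, hgap⟩ := exists_pos_forall_mul_lt_mul_abs_sub hδ.2 ht
  have hz₀ : cayleyInv a x ∈ ball 0 1 := mem_ball_zero_iff.mpr (norm_cayleyInv_lt_one ha hx0)
  have horbit (j : ℤ) : iterZ φ φinv j (cayleyInv a x) ∈ ball 0 1 := mapsTo_iterZ hφm hφinvm j hz₀
  have hcayley (j : ℤ) : cayley a (iterZ φ φinv j (cayleyInv a x)) =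
      x + (j * t : ℝ) * Complex.I := by
    rw [apply_iterZ_eq_add_zsmul hφm hφinvm hright htranslation hz₀,
      cayley_cayleyInv ha0 (add_one_ne_zero_of_re_nonneg hx0.le), zsmul_eq_mul]
    push_cast
    ring
  exact ⟨cayleyInv a x, hz₀, fun j₁ j₂ hj => lt_norm_blaschkeFactor_of_cayley_eq hδ.1.le hx0 ha
    (ne_of_mem_ball_of_norm_eq_one ha (horbit j₁)) (ne_of_mem_ball_of_norm_eq_one ha (horbit j₂))
    (hcayley j₁) (hcayley j₂) (hgap j₁ j₂ hj)⟩
end
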